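/- arXiv:2411.09597 — 5 statements merged into one kernel-verified Lean document; each statement's English description precedes it below -/
import Mathlib

section
/- Let p be an odd prime, let n and m be positive natural numbers, and let g : ((Fin n → ZMod p) × (Fin m → ZMod p)) → ZMod p be an arbitrary function. For x ∈ (ZMod p)^n and a, b ∈ (ZMod p)^m define f'(x, a, b) = ∑_{z ∈ {0,1}^m} g(x, a⊙z + b), where {0,1}^m is the set of vectors in (ZMod p)^m all of whose coordinates are 0 or 1, and (a⊙z + b)_j = a_j·z_j + b_j. Then for every index i ∈ Fin m and every r ∈ ZMod p, the sum of g(x, a⊙z + b) over all z ∈ (ZMod p)^m whose i-th coordinate equals r and whose other coordinates range over {0,1} equals 2⁻¹ · f'(x, a', b'), where a' is a with its i-th coordinate replaced by 0, b' is b with its i-th coordinate replaced by a_i·r + b_i, and 2⁻¹ is the inverse of 2 in ZMod p. -/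
/-!
After replacing `a i` by `0` and `b i` by `a i * r + b i`, the summand of `f'` no longer depends on
`z i` and equals the original summand at `z` with `i`-th coordinate set to `r`. Hence `f'` counts
each term of the restricted sum twice, once for each value of `z i ∈ {0, 1}`, and `2` is invertible
because `p` is odd.
-/

/-- The self-reduction property of the generalized certificate counting polynomial
`f'(x, a, b) = ∑_{z ∈ {0,1}^m} g(x, a⊙z + b)` over `ZMod p` for an odd prime `p`:
summing `g(x, a⊙z + b)` over all `z` whose `i`-th coordinate is `r` and whose other
coordinates range over `{0,1}` equals `2⁻¹` times `f'` evaluated at `a` with its `i`-th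
coordinate replaced by `0` and `b` with its `i`-th coordinate replaced by `a i * r + b i`. -/
theorem stmt0 (p : ℕ) [Fact p.Prime] (hodd : Odd p) (n m : ℕ) (hn : 0 < n) (hm : 0 < m)
    (g : ((Fin n → ZMod p) × (Fin m → ZMod p)) → ZMod p)
    (x : Fin n → ZMod p) (a b : Fin m → ZMod p) (i : Fin m) (r : ZMod p) :
    ∑ z ∈ Fintype.piFinset (fun j : Fin m =>
        if j = i then ({r} : Finset (ZMod p)) else ({0, 1} : Finset (ZMod p))),
      g (x, fun j => a j * z j + b j)
    = 2⁻¹ *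
      ∑ z ∈ Fintype.piFinset (fun _ : Fin m => ({0, 1} : Finset (ZMod p))),
        g (x, fun j => (Function.update a i 0) j * z j
            + (Function.update b i (a i * r + b i)) j) := by
  have h2 : (2 : ZMod p) ≠ 0 := by
    intro h
    have hdvd : p ∣ 2 := (ZMod.natCast_eq_zero_iff 2 p).1 (by exact_mod_cast h)
    have hp2 := (Nat.prime_dvd_prime_iff_eq Fact.out Nat.prime_two).1 hdvd
    subst hp2
    exact absurd hodd (by decide)
  -- The right-hand summand ignores `z i`, so each `w` with `w i = r` is counted exactly twice,
  -- once for each value `e ∈ {0, 1}` of the `i`-th coordinate of `z = Function.update w i e`.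
  have key : ∑ w ∈ Fintype.piFinset (fun j : Fin m =>
        if j = i then ({r} : Finset (ZMod p)) else ({0, 1} : Finset (ZMod p))) ×ˢ
          ({0, 1} : Finset (ZMod p)), g (x, fun j => a j * w.1 j + b j)
      = ∑ z ∈ Fintype.piFinset (fun _ : Fin m => ({0, 1} : Finset (ZMod p))),
        g (x, fun j => (Function.update a i 0) j * z j
            + (Function.update b i (a i * r + b i)) j) := by
    refine Finset.sum_bij' (fun w _ => Function.update w.1 i w.2)
      (fun z _ => (Function.update z i r, z i)) ?_ ?_ ?_ ?_ ?_
    · rintro ⟨w, e⟩ h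
      rw [Finset.mem_product, Fintype.mem_piFinset] at h
      rw [Fintype.mem_piFinset]
      intro j
      by_cases hj : j = i
      · subst hj
        simpa using h.2
      · simpa [hj] using h.1 j
    · intro z h
      rw [Fintype.mem_piFinset] at h
      rw [Finset.mem_product, Fintype.mem_piFinset]
      refine ⟨fun j => ?_, h i⟩
      by_cases hj : j = i
      · subst hj
        simp
      · simpa [hj] using h j
    · rintro ⟨w, e⟩ h
      rw [Finset.mem_product, Fintype.mem_piFinset] at h
      have hr : w i = r := by simpa using h.1 i
      simp [← hr]
    · intro z _
      simp
    · rintro ⟨w, e⟩ h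
      rw [Finset.mem_product, Fintype.mem_piFinset] at h
      have hr : w i = r := by simpa using h.1 i
      congr 2
      funext j
      by_cases hj : j = i
      · subst hj
        simp [hr]
      · simp [hj]
  rw [← key, Finset.sum_product]
  simp only [Finset.sum_const, Finset.card_pair (zero_ne_one (α := ZMod p))]
  rw [← Finset.smul_sum, nsmul_eq_mul, Nat.cast_ofNat, inv_mul_cancel_left₀ h2]
end

section
/- Assume there exists a constant C > 0 such that for every n ≥ 1 the consecutive prime gap satisfies p_{n+1} − p_n ≤ C · p_n^{0.525}, where p_n is the n-th prime. Then there exists N such that for every natural number m ≥ N, the number of primes p with m < p < 2m is at least m^{0.474}. -/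
/-!
Let `b + 1` be the number of primes up to `m` and `k` the number of primes below `2m`, so that
(with zero-based indexing) `p_b ≤ m`, `p_k ≥ 2m`, and exactly `k - (b + 1)` primes lie strictly
between `m` and `2m`. The distance `p_k - p_b ≥ m` is a sum of `k - b` consecutive gaps, each
starting at a prime below `2m` and hence at most `C (2m)^0.525` (`nth_prime_sub_le`). Therefore
`m ≤ (#primes + 1) * C (2m)^0.525`. If the number of primes were below `m^0.474`, this would give
`m ≤ 4 C m^0.999`, which is false once `m^0.001` exceeds `4 C`.
-/

/-- Summing consecutive gaps: if every gap starting at a prime below `M` is at most `B`, then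
`j` consecutive steps, all starting below `M`, advance by at most `j * B`. -/
lemma nth_prime_sub_le {B : ℝ} {M : ℕ}
    (hB : ∀ i, Nat.nth Nat.Prime i < M →
      (Nat.nth Nat.Prime (i + 1) : ℝ) - Nat.nth Nat.Prime i ≤ B) (b : ℕ) :
    ∀ j, b + j ≤ Nat.count Nat.Prime M →
      (Nat.nth Nat.Prime (b + j) : ℝ) - Nat.nth Nat.Prime b ≤ j * B := by
  intro j
  induction j with
  | zero => simp
  | succ j ih =>
    intro hj
    have h1 := ih (by omega)
    have h2 := hB (b + j) (Nat.nth_lt_of_lt_count (by omega))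
    rw [← add_assoc]
    push_cast
    linarith

lemma card_primes_Ioo_add_count {m : ℕ} (hm : 1 ≤ m) :
    ((Finset.Ioo m (2 * m)).filter Nat.Prime).card + Nat.count Nat.Prime (m + 1) =
      Nat.count Nat.Prime (2 * m) := by
  rw [Nat.count_eq_card_filter_range, Nat.count_eq_card_filter_range,
    ← Finset.card_union_of_disjoint]
  · congr 1
    ext x
    simp only [Finset.mem_union, Finset.mem_filter, Finset.mem_Ioo, Finset.mem_range]
    by_cases hx : x.Prime
    · simp only [hx, and_true]
      omega
    · simp [hx]
  · rw [Finset.disjoint_left]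
    intro x hx hx'
    simp only [Finset.mem_filter, Finset.mem_Ioo, Finset.mem_range] at hx hx'
    omega

/-- Assuming the Baker–Harman–Pintz prime gap bound (`p_{n+1} - p_n ≤ C * p_n ^ 0.525`
for all `n ≥ 1`, with `p_n` the `n`-th prime), for all sufficiently large `m` the number
of primes `p` with `m < p < 2m` is at least `m ^ 0.474`. -/
theorem stmt2
    (hgap : ∃ C : ℝ, 0 < C ∧ ∀ n : ℕ, 1 ≤ n →
      ((Nat.nth Nat.Prime n : ℝ) - (Nat.nth Nat.Prime (n - 1) : ℝ)) ≤
        C * (Nat.nth Nat.Prime (n - 1) : ℝ) ^ (0.525 : ℝ)) :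
    ∃ N : ℕ, ∀ m : ℕ, N ≤ m →
      (m : ℝ) ^ (0.474 : ℝ) ≤ (((Finset.Ioo m (2 * m)).filter Nat.Prime).card : ℝ) := by
  obtain ⟨C, hC, hgap⟩ := hgap
  have hev : ∀ᶠ m : ℕ in Filter.atTop, 4 * C ≤ (m : ℝ) ^ (0.001 : ℝ) :=
    ((tendsto_rpow_atTop (by norm_num : (0 : ℝ) < 0.001)).comp
      tendsto_natCast_atTop_atTop).eventually_ge_atTop (4 * C)
  obtain ⟨N, hN⟩ := Filter.eventually_atTop.mp hev
  refine ⟨max N 2, fun m hm => ?_⟩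
  have hm2 : 2 ≤ m := le_trans (le_max_right _ _) hm
  have hbig := hN m (le_trans (le_max_left _ _) hm)
  by_contra! hlt
  have hcard := card_primes_Ioo_add_count (m := m) (by omega)
  set c := ((Finset.Ioo m (2 * m)).filter Nat.Prime).card
  have hpos : 0 < Nat.count Nat.Prime (m + 1) := by
    rw [Nat.pos_iff_ne_zero, Nat.count_ne_iff_exists]
    exact ⟨2, by omega, Nat.prime_two⟩
  obtain ⟨b, hb⟩ := Nat.exists_eq_add_one.mpr hpos
  have hpb : Nat.nth Nat.Prime b < m + 1 := Nat.nth_lt_of_lt_count (by omega)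
  have hpk : 2 * m ≤ Nat.nth Nat.Prime (b + (c + 1)) := by
    have h : b + (c + 1) = Nat.count Nat.Prime (2 * m) := by omega
    rw [h]
    exact Nat.le_nth_count Nat.infinite_setOfPred_prime _
  have hsum := nth_prime_sub_le (M := 2 * m) (B := C * (2 * m : ℝ) ^ (0.525 : ℝ))
    (fun i hi => by
      have h := hgap (i + 1) (by omega)
      rw [Nat.add_sub_cancel] at h
      refine h.trans ?_
      gcongr
      exact_mod_cast hi.le) b (c + 1) (by omega)
  have hpb' : (Nat.nth Nat.Prime b : ℝ) ≤ m := by exact_mod_cast Nat.lt_succ_iff.mp hpb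
  have hpk' : (2 * m : ℝ) ≤ Nat.nth Nat.Prime (b + (c + 1)) := by exact_mod_cast hpk
  push_cast at hsum
  have hm0 : (0 : ℝ) < m := by positivity
  have hm1 : (1 : ℝ) ≤ m := by exact_mod_cast (by omega : 1 ≤ m)
  have hone : (1 : ℝ) ≤ (m : ℝ) ^ (0.474 : ℝ) := Real.one_le_rpow hm1 (by norm_num)
  have htwo : (2 : ℝ) ^ (0.525 : ℝ) ≤ 2 :=
    (Real.rpow_le_rpow_of_exponent_le one_le_two (by norm_num)).trans_eq (Real.rpow_one 2)
  have hBle : C * (2 * m : ℝ) ^ (0.525 : ℝ) ≤ C * (2 * (m : ℝ) ^ (0.525 : ℝ)) := by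
    rw [Real.mul_rpow zero_le_two hm0.le]
    gcongr
  have hB0 : 0 < C * (2 * m : ℝ) ^ (0.525 : ℝ) := by positivity
  have hprod : (m : ℝ) ^ (0.474 : ℝ) * (m : ℝ) ^ (0.525 : ℝ) = (m : ℝ) ^ (0.999 : ℝ) := by
    rw [← Real.rpow_add hm0]
    norm_num
  have hsplit : (m : ℝ) ^ (0.001 : ℝ) * (m : ℝ) ^ (0.999 : ℝ) = m := by
    rw [← Real.rpow_add hm0]
    norm_num
  have : (m : ℝ) < m := calc
    (m : ℝ) ≤ (c + 1) * (C * (2 * m : ℝ) ^ (0.525 : ℝ)) := by linarith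
    _ < (2 * (m : ℝ) ^ (0.474 : ℝ)) * (C * (2 * m : ℝ) ^ (0.525 : ℝ)) := by
      apply mul_lt_mul_of_pos_right _ hB0
      linarith
    _ ≤ (2 * (m : ℝ) ^ (0.474 : ℝ)) * (C * (2 * (m : ℝ) ^ (0.525 : ℝ))) := by gcongr
    _ = 4 * C * (m : ℝ) ^ (0.999 : ℝ) := by
      rw [← hprod]
      ring
    _ ≤ (m : ℝ) ^ (0.001 : ℝ) * (m : ℝ) ^ (0.999 : ℝ) := by gcongr
    _ = m := hsplit
  exact lt_irrefl _ this
end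

section
/- Let c ≥ 1 be a natural number and let β be a real number with β ≥ 1000·(c + 1). Assume there exists a constant C > 0 such that for every n ≥ 1 the consecutive prime gap satisfies p_{n+1} − p_n ≤ C · p_n^{0.525}, where p_n is the n-th prime. Then there exists N such that for every natural number n ≥ N, the number of primes q satisfying n^β < q < n^β + n^β/(n + 2n^c) is at least n^{0.474·β}. -/
/-!
Put `X = n ^ β` and let `L = X / (n + 2 n ^ c)`, so that `X / (3 n ^ c) ≤ L ≤ X`. Every gap that
starts at a prime `p ≤ 2 X` has length at most `D = 2 C X ^ 0.525`. Walking upwards from the largest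
prime `≤ X`, the first `m` primes above `X` therefore stay below `X + m D`
(`le_ncard_primes_of_gap`). With `m = ⌈X ^ 0.474⌉₊` we have `m D ≤ 4 C X ^ 0.999`, and
this is `< L` as soon as `12 C n ^ c < X ^ 0.001`; since `X ^ 0.001 = n ^ (β / 1000) ≥ n ^ (c + 1)`,
it is enough that `n > 12 C`.
-/

/-- If all prime gaps starting at a prime `≤ X + L` are at most `D`, and `m * D < L`, then the
interval `(X, X + L)` contains at least `m` primes. -/
lemma le_ncard_primes_of_gap (X L D : ℝ) (hX : 2 ≤ X) (hD : 0 ≤ D) (m : ℕ) (hm : (m : ℝ) * D < L)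
    (hgap : ∀ k : ℕ, (Nat.nth Nat.Prime k : ℝ) ≤ X + L →
      (Nat.nth Nat.Prime (k + 1) : ℝ) - Nat.nth Nat.Prime k ≤ D) :
    m ≤ ({q : ℕ | q.Prime ∧ X < (q : ℝ) ∧ (q : ℝ) < X + L}).ncard := by
  have hinf : (Set.ofPred Nat.Prime).Infinite := Nat.infinite_setOfPred_prime
  -- `k + 1` is the number of primes `≤ X`, so `nth Nat.Prime k` is the largest such prime.
  obtain ⟨k, hk⟩ : ∃ k, Nat.count Nat.Prime (⌊X⌋₊ + 1) = k + 1 := by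
    have h2 : 2 < ⌊X⌋₊ + 1 := Nat.lt_succ_of_le (Nat.le_floor (by exact_mod_cast hX))
    have : 0 < Nat.count Nat.Prime (⌊X⌋₊ + 1) := by
      have := Nat.count_strict_mono Nat.prime_two h2
      omega
    exact ⟨_, (Nat.succ_pred_eq_of_pos this).symm⟩
  have hlow : (Nat.nth Nat.Prime k : ℝ) ≤ X := by
    have : Nat.nth Nat.Prime k < ⌊X⌋₊ + 1 := Nat.nth_lt_of_lt_count (by omega)
    exact (Nat.le_floor_iff (by linarith)).1 (Nat.lt_succ_iff.1 this)
  have hhigh : X < Nat.nth Nat.Prime (k + 1) := by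
    have : ⌊X⌋₊ + 1 ≤ Nat.nth Nat.Prime (k + 1) := by
      rw [← hk]
      exact Nat.le_nth_count hinf _
    exact Nat.lt_of_floor_lt this
  have hwalk : ∀ j : ℕ, j ≤ m → (Nat.nth Nat.Prime (k + j) : ℝ) ≤ X + j * D := by
    intro j
    induction j with
    | zero => intro _; simpa using hlow
    | succ j ih =>
      intro hj
      have h1 := ih (by omega)
      have h2 : (j : ℝ) * D ≤ m * D := by gcongr; omega
      have h3 := hgap (k + j) (by linarith)
      rw [← add_assoc]
      push_cast
      linarith
  have hfin : ({q : ℕ | q.Prime ∧ X < (q : ℝ) ∧ (q : ℝ) < X + L}).Finite := by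
    refine (Set.finite_Iic ⌊X + L⌋₊).subset ?_
    rintro q ⟨-, -, hq⟩
    exact Nat.le_floor hq.le
  have hinj : Function.Injective (fun j : ℕ => Nat.nth Nat.Prime (k + 1 + j)) :=
    (Nat.nth_injective hinf).comp (add_right_injective (k + 1))
  have hsub : (((Finset.range m).image (fun j : ℕ => Nat.nth Nat.Prime (k + 1 + j)) :
      Finset ℕ) : Set ℕ) ⊆ {q : ℕ | q.Prime ∧ X < (q : ℝ) ∧ (q : ℝ) < X + L} := by
    intro q hq
    simp only [Finset.coe_image, Finset.coe_range, Set.mem_image, Set.mem_Iio] at hq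
    obtain ⟨j, hj, rfl⟩ := hq
    refine ⟨Nat.prime_nth_prime _, hhigh.trans_le ?_, ?_⟩
    · exact_mod_cast Nat.nth_monotone hinf (by omega : k + 1 ≤ k + 1 + j)
    · have h1 := hwalk (j + 1) hj
      have h2 : ((j + 1 : ℕ) : ℝ) * D ≤ m * D := by gcongr; omega
      rw [show k + 1 + j = k + (j + 1) by ring]
      linarith
  have := Set.ncard_le_ncard hsub hfin
  rwa [Set.ncard_coe_finset, Finset.card_image_of_injective _ hinj, Finset.card_range] at this

/-- The prime-counting estimate (Equation 11): for `c ≥ 1` and `β ≥ 1000(c+1)`, assuming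
the Baker–Harman–Pintz prime gap bound, for all sufficiently large `n` the number of primes
`q` with `n^β < q < n^β + n^β/(n + 2n^c)` is at least `n^{0.474·β}`. -/
theorem stmt3 (c : ℕ) (hc : 1 ≤ c) (β : ℝ) (hβ : 1000 * ((c : ℝ) + 1) ≤ β)
    (hgap : ∃ C : ℝ, 0 < C ∧ ∀ n : ℕ, 1 ≤ n →
      ((Nat.nth Nat.Prime n : ℝ) - (Nat.nth Nat.Prime (n - 1) : ℝ)) ≤
        C * (Nat.nth Nat.Prime (n - 1) : ℝ) ^ (0.525 : ℝ)) :
    ∃ N : ℕ, ∀ n : ℕ, N ≤ n →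
      (n : ℝ) ^ ((0.474 : ℝ) * β) ≤
        (({q : ℕ | q.Prime ∧ (n : ℝ) ^ β < (q : ℝ) ∧
            (q : ℝ) < (n : ℝ) ^ β + (n : ℝ) ^ β / ((n : ℝ) + 2 * (n : ℝ) ^ c)}).ncard : ℝ) := by
  obtain ⟨C, hC, hgap⟩ := hgap
  refine ⟨⌈12 * C⌉₊ + 2, fun n hn => ?_⟩
  have hn2 : (2 : ℝ) ≤ n := by exact_mod_cast (by omega : 2 ≤ n)
  have hnC : 12 * C < n := by
    have h1 := Nat.le_ceil (12 * C)
    have h2 : ((⌈12 * C⌉₊ + 2 : ℕ) : ℝ) ≤ n := by exact_mod_cast hn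
    push_cast at h2
    linarith
  have hn0 : (0 : ℝ) < n := by linarith
  have hn1 : (1 : ℝ) ≤ n := by linarith
  have hc0 : (0 : ℝ) ≤ c := Nat.cast_nonneg c
  have hexp : (n : ℝ) ^ ((0.474 : ℝ) * β) = ((n : ℝ) ^ β) ^ (0.474 : ℝ) := by
    rw [mul_comm, Real.rpow_mul hn0.le]
  have hpow : (n : ℝ) * (n : ℝ) ^ c ≤ ((n : ℝ) ^ β) ^ (0.001 : ℝ) := by
    rw [← Real.rpow_mul hn0.le, ← pow_succ', ← Real.rpow_natCast]
    apply Real.rpow_le_rpow_of_exponent_le hn1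
    push_cast
    linarith
  have hX : (n : ℝ) ≤ (n : ℝ) ^ β := by
    conv_lhs => rw [← Real.rpow_one (n : ℝ)]
    exact Real.rpow_le_rpow_of_exponent_le hn1 (by linarith)
  have hnc : (n : ℝ) ≤ (n : ℝ) ^ c := le_self_pow₀ hn1 (by omega)
  rw [hexp]
  generalize (n : ℝ) ^ β = X at *
  have hX0 : 0 < X := by linarith
  have hX1 : 1 ≤ X := by linarith
  have hL1 : X / ((n : ℝ) + 2 * (n : ℝ) ^ c) ≤ X := div_le_self hX0.le (by linarith)
  have hL2 : X / (3 * (n : ℝ) ^ c) ≤ X / ((n : ℝ) + 2 * (n : ℝ) ^ c) := by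
    gcongr
    linarith
  have hA1 : 1 ≤ X ^ (0.474 : ℝ) := Real.one_le_rpow hX1 (by norm_num)
  have hm : (⌈X ^ (0.474 : ℝ)⌉₊ : ℝ) ≤ 2 * X ^ (0.474 : ℝ) := by
    have := Nat.ceil_lt_add_one (zero_le_one.trans hA1)
    linarith
  have hB : 0 < X ^ (0.525 : ℝ) := Real.rpow_pos_of_pos hX0 _
  have hE : 0 < X ^ (0.474 : ℝ) * X ^ (0.525 : ℝ) := by positivity
  have hprod : X ^ (0.474 : ℝ) * X ^ (0.525 : ℝ) * X ^ (0.001 : ℝ) = X := by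
    rw [← Real.rpow_add hX0, ← Real.rpow_add hX0]
    norm_num
  have hmD : (⌈X ^ (0.474 : ℝ)⌉₊ : ℝ) * (2 * C * X ^ (0.525 : ℝ)) <
      X / ((n : ℝ) + 2 * (n : ℝ) ^ c) := by
    refine lt_of_lt_of_le ?_ hL2
    have hnc0 : 0 < (n : ℝ) ^ c := by positivity
    rw [lt_div_iff₀ (by positivity)]
    calc (⌈X ^ (0.474 : ℝ)⌉₊ : ℝ) * (2 * C * X ^ (0.525 : ℝ)) * (3 * (n : ℝ) ^ c)
        ≤ (2 * X ^ (0.474 : ℝ)) * (2 * C * X ^ (0.525 : ℝ)) * (3 * (n : ℝ) ^ c) := by gcongr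
      _ = X ^ (0.474 : ℝ) * X ^ (0.525 : ℝ) * (12 * C * (n : ℝ) ^ c) := by ring
      _ < X ^ (0.474 : ℝ) * X ^ (0.525 : ℝ) * (n * (n : ℝ) ^ c) := by gcongr
      _ ≤ X ^ (0.474 : ℝ) * X ^ (0.525 : ℝ) * X ^ (0.001 : ℝ) := by gcongr
      _ = X := hprod
  refine (Nat.le_ceil _).trans (Nat.cast_le.2 ?_)
  refine le_ncard_primes_of_gap X _ (2 * C * X ^ (0.525 : ℝ)) (by linarith) (by positivity) _ hmD ?_
  intro k hk
  have h1 := hgap (k + 1) (by omega)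
  simp only [Nat.add_sub_cancel] at h1
  refine h1.trans ?_
  have h2 : (Nat.nth Nat.Prime k : ℝ) ^ (0.525 : ℝ) ≤ 2 * X ^ (0.525 : ℝ) := by
    calc (Nat.nth Nat.Prime k : ℝ) ^ (0.525 : ℝ) ≤ (2 * X) ^ (0.525 : ℝ) := by
          apply Real.rpow_le_rpow (by positivity) (by linarith) (by norm_num)
      _ = 2 ^ (0.525 : ℝ) * X ^ (0.525 : ℝ) := Real.mul_rpow (by norm_num) hX0.le
      _ ≤ 2 * X ^ (0.525 : ℝ) := by
          gcongr
          exact Real.rpow_le_self_of_one_le (by norm_num) (by norm_num)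
  calc C * (Nat.nth Nat.Prime k : ℝ) ^ (0.525 : ℝ) ≤ C * (2 * X ^ (0.525 : ℝ)) := by gcongr
    _ = 2 * C * X ^ (0.525 : ℝ) := by ring
end

section
/- Let α > 0 be a real number and n ≥ 2 a natural number with n^α ≥ 2e, where e is Euler's number. Let S be a nonempty finite set, W > 0 a real number, and w, c : S → ℝ functions with W ≤ w(s) ≤ e·W and 0 ≤ c(s) ≤ w(s) for every s ∈ S. If ∑_{s ∈ S} c(s) ≥ W·|S|/n^α, then the number of s ∈ S with c(s)/w(s) > 1/n^{2α} is at least |S|/(2e·n^α). -/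
/-!
Write `N = n ^ α`. Each `s` with correctness fraction above `1 / N ^ 2` contributes at most
`w s ≤ e * W` to `∑ c s`; every other `s` contributes at most `e * W / N ^ 2`. Since `2 * e ≤ N`,
the latter add up to at most `W * |S| / (2 * N)`, half of the assumed lower bound, so the former
must account for the other half, which takes at least `|S| / (2 * e * N)` of them.
-/

open scoped Classical

/-- The quantitative core of Lemma 8: if the oracle is correct on a `1/n^α`-fraction of
all instances over all primes `s ∈ S` (with `w s ∈ [W, e·W]` the instance count of `s`
and `c s` the count of correctly answered instances), then at least `|S|/(2e·n^α)` of
the elements `s ∈ S` have correctness fraction `c s / w s` exceeding `1/n^{2α}`. -/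
theorem stmt7 (α : ℝ) (hα : 0 < α) (n : ℕ) (hn : 2 ≤ n)
    (hnα : 2 * Real.exp 1 ≤ (n : ℝ) ^ α)
    {ι : Type*} (S : Finset ι) (hS : S.Nonempty) (W : ℝ) (hW : 0 < W)
    (w c : ι → ℝ)
    (hw : ∀ s ∈ S, W ≤ w s ∧ w s ≤ Real.exp 1 * W)
    (hc : ∀ s ∈ S, 0 ≤ c s ∧ c s ≤ w s)
    (hsum : W * S.card / (n : ℝ) ^ α ≤ ∑ s ∈ S, c s) :
    (S.card : ℝ) / (2 * Real.exp 1 * (n : ℝ) ^ α) ≤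
      ((S.filter fun s => 1 / (n : ℝ) ^ (2 * α) < c s / w s).card : ℝ) := by
  have he : 0 < Real.exp 1 := Real.exp_pos 1
  have hN2 : (n : ℝ) ^ (2 * α) = ((n : ℝ) ^ α) ^ 2 := by
    rw [mul_comm, Real.rpow_mul (Nat.cast_nonneg n), Real.rpow_two]
  rw [hN2]
  generalize (n : ℝ) ^ α = N at *
  generalize Real.exp 1 = e at *
  have hN : 0 < N := by linarith
  set P : ι → Prop := fun s => 1 / N ^ 2 < c s / w s with hP
  -- A good `s` contributes at most `e * W`, a bad one at most `w s / N ^ 2`.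
  have hpt : ∀ s ∈ S, c s ≤ (if P s then e * W else 0) + e * W / N ^ 2 := by
    intro s hs
    obtain ⟨h1, h2⟩ := hw s hs
    obtain ⟨-, h4⟩ := hc s hs
    have hws : 0 < w s := hW.trans_le h1
    split_ifs with h
    · have : 0 ≤ e * W / N ^ 2 := by positivity
      linarith
    · have h5 : c s / w s ≤ 1 / N ^ 2 := not_lt.mp h
      rw [div_le_iff₀ hws] at h5
      calc c s ≤ 1 / N ^ 2 * w s := h5
        _ ≤ 1 / N ^ 2 * (e * W) := by gcongr
        _ = 0 + e * W / N ^ 2 := by ring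
  have hle := hsum.trans (Finset.sum_le_sum hpt)
  rw [Finset.sum_add_distrib, ← Finset.sum_filter, Finset.sum_const, Finset.sum_const,
    nsmul_eq_mul, nsmul_eq_mul] at hle
  -- The bad elements use up at most half of the assumed total, as `2 * e ≤ N`.
  have hbad : (S.card : ℝ) * (e * W / N ^ 2) ≤ W * S.card / N / 2 := by
    have h : e / N ^ 2 ≤ 1 / (2 * N) := by
      rw [div_le_div_iff₀ (by positivity) (by positivity)]
      nlinarith
    calc (S.card : ℝ) * (e * W / N ^ 2) = S.card * W * (e / N ^ 2) := by ring
      _ ≤ S.card * W * (1 / (2 * N)) := by gcongr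
      _ = W * S.card / N / 2 := by field_simp
  have hgood : W * S.card / N / 2 ≤ ((S.filter P).card : ℝ) * (e * W) := by linarith
  calc (S.card : ℝ) / (2 * e * N) = (W * S.card / N / 2) / (e * W) := by field_simp
    _ ≤ ((S.filter P).card : ℝ) := (div_le_iff₀ (by positivity)).mpr hgood
end

section
/- Let Y be a type, m ≥ 1 a natural number, D a probability mass function on (Fin m → Y), and C, L : Y → Bool two functions. Let q be a real number with 0 ≤ q and suppose the probability under y ∼ D of the event {y : for all i ∈ Fin m, C(y(i)) = L(y(i))} is at most q. Then the probability that C(y') ≠ L(y'), where y' is sampled by drawing i uniformly from Fin m, drawing y ∼ D, and setting y' = y(i), is at least (1 − q)/m. -/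
/-!
The event "`C` and `L` agree on every coordinate" together with the `m` events "`C` and `L` differ
at coordinate `i`" cover the sample space, so by the union bound the latter have total probability
at least `1 - q`; the error probability of the mixture is the average of these `m` probabilities.

`C` and `L` are arbitrary, so the events need not be measurable. The argument runs with
`PMF.toOuterMeasure`, which is the sum of the point masses on every set and is bounded above by
`PMF.toMeasure`; this inequality is in the direction needed in both hypothesis and conclusion.
-/

/-- The combinatorial core of the variant of Lipton's theorem (Theorem 2): if under
`y ∼ D` the probability that `C` agrees with `L` on all `m` coordinates simultaneously
is at most `q`, then under the mixture distribution (draw `i` uniformly from `Fin m`,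
draw `y ∼ D`, output `y i`) the probability that `C` disagrees with `L` is at least
`(1 − q)/m`. -/
theorem stmt9 {Y : Type*} [MeasurableSpace Y] (m : ℕ) (hm : 1 ≤ m)
    (D : PMF (Fin m → Y)) (C L : Y → Bool) (q : ℝ) (hq0 : 0 ≤ q)
    (hq : D.toMeasure {y : Fin m → Y | ∀ i : Fin m, C (y i) = L (y i)} ≤
      ENNReal.ofReal q) :
    ENNReal.ofReal ((1 - q) / m) ≤
      ((@PMF.uniformOfFintype (Fin m) _ ⟨⟨0, hm⟩⟩).bind
          (fun i => D.map (fun y => y i))).toMeasure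
        {y' : Y | C y' ≠ L y'} := by
  set A : Set (Fin m → Y) := {y | ∀ i, C (y i) = L (y i)}
  set B : Fin m → Set (Fin m → Y) := fun i => {y | C (y i) ≠ L (y i)}
  have hA : D.toOuterMeasure A ≤ ENNReal.ofReal q :=
    (D.toOuterMeasure_apply_le_toMeasure_apply A).trans hq
  have hcover : (Set.univ : Set (Fin m → Y)) ⊆ A ∪ ⋃ i, B i := by
    intro y _
    by_cases h : ∀ i, C (y i) = L (y i)
    · exact Or.inl h
    · push Not at h
      exact Or.inr (Set.mem_iUnion.2 h)
  have huniv : D.toOuterMeasure Set.univ = 1 :=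
    (D.toOuterMeasure_apply_eq_one_iff _).2 (Set.subset_univ _)
  have hunion : 1 ≤ ENNReal.ofReal q + ∑ i, D.toOuterMeasure (B i) := by
    rw [← huniv]
    calc D.toOuterMeasure Set.univ ≤ D.toOuterMeasure (A ∪ ⋃ i, B i) :=
          MeasureTheory.measure_mono hcover
      _ ≤ D.toOuterMeasure A + D.toOuterMeasure (⋃ i, B i) :=
          MeasureTheory.measure_union_le _ _
      _ ≤ ENNReal.ofReal q + ∑ i, D.toOuterMeasure (B i) :=
          add_le_add hA (MeasureTheory.measure_iUnion_fintype_le _ _)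
  have hsum : ENNReal.ofReal (1 - q) ≤ ∑ i, D.toOuterMeasure (B i) := by
    rw [ENNReal.ofReal_sub _ hq0, ENNReal.ofReal_one]
    exact tsub_le_iff_left.2 hunion
  refine le_trans ?_ (PMF.toOuterMeasure_apply_le_toMeasure_apply _ _)
  rw [PMF.toOuterMeasure_bind_apply, tsum_fintype]
  simp only [PMF.uniformOfFintype_apply, PMF.toOuterMeasure_map_apply, Fintype.card_fin]
  rw [← Finset.mul_sum, ENNReal.ofReal_div_of_pos (by exact_mod_cast hm), ENNReal.ofReal_natCast,
    div_eq_mul_inv, mul_comm]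
  gcongr
  exact hsum
end
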